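/- For every δ > 0 there exists N such that for all n ≥ N, the probability that |det M_n| ≥ √(n!) · exp(−29 · n^{1/2} · (ln n)^{1/2}) is at least 1 − δ. (That is, with probability 1 − o(1) as n → ∞, the absolute value of the determinant of a random ±1 matrix is at least √(n!) exp(−29√(n ln n)).) -/

import Mathlib

/-- The random sign matrix determined by a Boolean matrix: entries are `+1` or `-1`. -/
noncomputable def signMatrix (n : ℕ) (b : Fin n → Fin n → Bool) : Matrix (Fin n) (Fin n) ℝ :=
  Matrix.of fun i j => if b i j then (1 : ℝ) else -1

/-!
`|det M_n|` is the product of the distances from each row to the span of the preceding rows. If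
that span has codimension `k` (or more), the squared distance is its codimension plus a quadratic
Rademacher chaos in the entries of the row, because the projection matrix has constant trace and
the squares of the entries contribute only the trace. Two moments of the chaos control almost all
rows. Its second moment makes the expected relative shortfall of the squared distance below `k` at
most `√(2 / k)`; summed over `k` this is `O(√n)`, which is the exponent in the bound. Its fourth
moment shows that, apart from the last `K` rows, all squared distances are at least `k / 2` with
probability `1 - O(1 / K)`, so that their logarithms are controlled by the shortfall.

For the last `K` rows a polynomial lower bound suffices. With high probability the first `n - K`
rows exhibit every sign pattern on every `2m` coordinates, and then any nonzero vector orthogonal to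
them has more than `2m` coordinates comparable to the largest one. By the Littlewood–Offord
inequality its inner product with a fresh row is small with probability only `O(1 / √m)`.
-/

open Filter Finset Function InnerProductSpace Module Submodule Topology
open scoped BigOperators RealInnerProductSpace

section UniformProb

variable {Ω : Type*} [Fintype Ω]

/-- The probability of an event under the uniform distribution on a finite type. -/
noncomputable def uniformProb (A : Set Ω) : ℝ :=
  (Nat.card A : ℝ) / Fintype.card Ω

lemma uniformProb_eq_expect (A : Set Ω) : uniformProb A = 𝔼 ω, A.indicator 1 ω := by
  classical
  rw [uniformProb, Fintype.expect_eq_sum_div_card, Nat.card_eq_card_toFinset,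
    ← Set.coe_toFinset A, sum_indicator_subset _ (subset_univ _)]
  simp

lemma uniformProb_mono {A B : Set Ω} (h : A ⊆ B) : uniformProb A ≤ uniformProb B := by
  unfold uniformProb
  gcongr
  exact Nat.card_mono B.toFinite h

lemma uniformProb_union_le (A B : Set Ω) :
    uniformProb (A ∪ B) ≤ uniformProb A + uniformProb B := by
  rw [uniformProb, uniformProb, uniformProb, ← add_div]
  gcongr
  exact_mod_cast Set.ncard_union_le A B

lemma uniformProb_biUnion_le {κ : Type*} (s : Finset κ) (A : κ → Set Ω) :
    uniformProb (⋃ i ∈ s, A i) ≤ ∑ i ∈ s, uniformProb (A i) := by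
  classical
  induction s using Finset.induction_on with
  | empty => simp [uniformProb]
  | insert a s ha ih =>
    rw [sum_insert ha, set_biUnion_insert]
    exact (uniformProb_union_le _ _).trans (by gcongr)

lemma uniformProb_setOf_exists_and_le {κ : Type*} [Fintype κ] (p : κ → Prop) [DecidablePred p]
    (q : κ → Ω → Prop) :
    uniformProb {ω | ∃ i, p i ∧ q i ω} ≤ ∑ i with p i, uniformProb {ω | q i ω} := by
  refine (uniformProb_mono fun ω hω => ?_).trans (uniformProb_biUnion_le _ _)
  simpa using hω

lemma uniformProb_add_compl [Nonempty Ω] (A : Set Ω) :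
    uniformProb A + uniformProb Aᶜ = 1 := by
  rw [uniformProb, uniformProb, ← add_div, div_eq_one_iff_eq (by simp)]
  exact_mod_cast (Set.ncard_add_ncard_compl A).trans Nat.card_eq_fintype_card

lemma uniformProb_setOf_le_le_expect_div {f : Ω → ℝ} (hf : ∀ ω, 0 ≤ f ω) {c : ℝ} (hc : 0 < c) :
    uniformProb {ω | c ≤ f ω} ≤ (𝔼 ω, f ω) / c := by
  rw [uniformProb_eq_expect, expect_div]
  refine expect_le_expect fun ω _ => ?_
  rw [Set.indicator_apply]
  split_ifs with hω
  · exact (one_le_div hc).2 hω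
  · exact div_nonneg (hf ω) hc.le

lemma expect_abs_le_sqrt_expect_sq (f : Ω → ℝ) : 𝔼 ω, |f ω| ≤ √(𝔼 ω, f ω ^ 2) := by
  apply Real.le_sqrt_of_sq_le
  have cauchySchwarz := expect_mul_sq_le_sq_mul_sq univ (fun ω => |f ω|) 1
  simp only [Pi.one_apply, mul_one, one_pow, sq_abs] at cauchySchwarz
  refine cauchySchwarz.trans (mul_le_of_le_one_right (by positivity) ?_)
  rcases isEmpty_or_nonempty Ω with h | h <;> simp

lemma uniformProb_univ [Nonempty Ω] : uniformProb (Set.univ : Set Ω) = 1 := by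
  simp [uniformProb]

lemma uniformProb_setOf_forall {ι α : Type*} [Fintype ι] [DecidableEq ι] [Fintype α]
    (p : ι → α → Prop) :
    uniformProb {x : ι → α | ∀ i, p i (x i)} = ∏ i, uniformProb {a | p i a} := by
  simp only [uniformProb, prod_div_distrib, Fintype.card_pi, Nat.cast_prod]
  congr 1
  exact_mod_cast (Nat.card_congr (Equiv.subtypePiEquivPi (p := p))).trans Nat.card_pi

lemma uniformProb_setOf_forall_mem {ι α : Type*} [Fintype ι] [DecidableEq ι] [Fintype α]
    [Nonempty α] (s : Finset ι) (p : ι → α → Prop) :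
    uniformProb {x : ι → α | ∀ i ∈ s, p i (x i)} = ∏ i ∈ s, uniformProb {a | p i a} := by
  rw [uniformProb_setOf_forall fun i a => i ∈ s → p i a, ← univ_inter s, ← prod_ite_mem]
  refine prod_congr rfl fun i _ => ?_
  split_ifs with hi <;> simp [hi, ← uniformProb_univ (Ω := α)]

lemma uniformProb_le_of_forall_fiber {Ω₁ Ω₂ : Type*} [Fintype Ω₁] [Finite Ω₂] [Nonempty Ω₂]
    (e : Ω₁ × Ω₂ ≃ Ω) {A : Set Ω} {c : ℝ}
    (h : ∀ z, uniformProb {y | e (y, z) ∈ A} ≤ c) : uniformProb A ≤ c := by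
  have := Fintype.ofFinite Ω₂
  rw [uniformProb_eq_expect, ← Fintype.expect_equiv e (fun p => A.indicator 1 (e p)) _
    (fun _ => rfl), ← univ_product_univ, expect_product, expect_comm]
  refine expect_le univ_nonempty fun z _ => ?_
  exact (uniformProb_eq_expect {y | e (y, z) ∈ A}).symm.trans_le (h z)

lemma expect_le_of_forall_update {ι α : Type*} [Fintype ι] [DecidableEq ι] [Fintype α] [Nonempty α]
    (i : ι) {f : (ι → α) → ℝ} {c : ℝ} (h : ∀ b, 𝔼 a, f (update b i a) ≤ c) : 𝔼 b, f b ≤ c := by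
  have hinv : Involutive fun z : (ι → α) × α => (update z.1 i z.2, z.1 i) := fun z => by simp
  have resample := Fintype.expect_equiv hinv.toPerm (fun z : (ι → α) × α => f z.1)
    (fun z => f (update z.1 i z.2)) fun z => by simp [Involutive.toPerm]
  rw [← univ_product_univ, expect_product, expect_product] at resample
  simp only [Fintype.expect_const] at resample
  rw [resample]
  exact expect_le univ_nonempty fun b _ => h b

lemma uniformProb_le_of_forall_update {ι α : Type*} [Fintype ι] [DecidableEq ι] [Fintype α]
    [Nonempty α] (i : ι) {A : Set (ι → α)} {c : ℝ}
    (h : ∀ b, uniformProb {a | update b i a ∈ A} ≤ c) : uniformProb A ≤ c := by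
  rw [uniformProb_eq_expect]
  exact expect_le_of_forall_update i fun b => (uniformProb_eq_expect _).symm.trans_le (h b)

end UniformProb

section Chaos

/-- The real sign `±1` encoded by a Boolean, with `true` standing for `+1`. -/
noncomputable def boolSign (c : Bool) : ℝ := if c then 1 else -1

lemma boolSign_not (c : Bool) : boolSign (!c) = -boolSign c := by
  cases c <;> simp [boolSign]

lemma boolSign_sq (c : Bool) : boolSign c ^ 2 = 1 := by
  cases c <;> simp [boolSign]

lemma abs_boolSign (c : Bool) : |boolSign c| = 1 := by
  cases c <;> simp [boolSign]

variable {ι : Type*}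

/-- The Rademacher sum `∑ c i * x i`, a homogeneous chaos of order one, over the indices in `S`. -/
noncomputable def linearChaos (c : ι → ℝ) (S : Finset ι) (x : ι → Bool) : ℝ :=
  ∑ i ∈ S, c i * boolSign (x i)

lemma dependsOn_linearChaos (c : ι → ℝ) (S : Finset ι) : DependsOn (linearChaos c S) S :=
  fun _ _ hxy => sum_congr rfl fun i hi => by rw [hxy i hi]

/-- The Rademacher chaos of order two with coefficients `A`, over the ordered pairs of distinct
indices in `S`. -/
noncomputable def quadraticChaos (A : Matrix ι ι ℝ) (S : Finset ι) (x : ι → Bool) : ℝ :=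
  ∑ p ∈ S.offDiag, A p.1 p.2 * (boolSign (x p.1) * boolSign (x p.2))

lemma dependsOn_quadraticChaos (A : Matrix ι ι ℝ) (S : Finset ι) :
    DependsOn (quadraticChaos A S) S := fun _ _ hxy => sum_congr rfl fun p hp => by
  rw [hxy p.1 (mem_offDiag.1 hp).1, hxy p.2 (mem_offDiag.1 hp).2.1]

variable [DecidableEq ι] {S : Finset ι} {a : ι}

lemma linearChaos_insert (c : ι → ℝ) (ha : a ∉ S) (x : ι → Bool) :
    linearChaos c (insert a S) x = linearChaos c S x + boolSign (x a) * c a := by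
  rw [linearChaos, sum_insert ha, linearChaos]
  ring

lemma sum_offDiag_insert {M : Type*} [AddCommMonoid M] (ha : a ∉ S)
    (f : ι × ι → M) :
    ∑ p ∈ (insert a S).offDiag, f p = ∑ p ∈ S.offDiag, f p + ∑ i ∈ S, (f (a, i) + f (i, a)) := by
  rw [offDiag_insert ha, sum_union, sum_union, sum_add_distrib, singleton_product,
    product_singleton, sum_map, sum_map, add_assoc]
  · rfl
  all_goals
    rw [disjoint_left]
    rintro ⟨i, j⟩ h h'
    simp only [mem_union, mem_offDiag, mem_product, mem_singleton] at h h'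
    grind

lemma quadraticChaos_insert {A : Matrix ι ι ℝ} (hA : A.IsSymm) (ha : a ∉ S)
    (x : ι → Bool) :
    quadraticChaos A (insert a S) x =
      quadraticChaos A S x + boolSign (x a) * linearChaos (2 • A a) S x := by
  rw [quadraticChaos, sum_offDiag_insert ha, quadraticChaos, linearChaos, mul_sum]
  congr 1
  refine sum_congr rfl fun i _ => ?_
  simp only [hA.apply, Pi.smul_apply, nsmul_eq_mul, Nat.cast_ofNat]
  ring

lemma sum_sq_offDiag_insert {A : Matrix ι ι ℝ} (hA : A.IsSymm) (ha : a ∉ S) :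
    2 * ∑ p ∈ (insert a S).offDiag, A p.1 p.2 ^ 2 =
      2 * ∑ p ∈ S.offDiag, A p.1 p.2 ^ 2 + ∑ i ∈ S, (2 • A a) i ^ 2 := by
  rw [sum_offDiag_insert ha, mul_add, mul_sum (s := S)]
  congr 1
  refine sum_congr rfl fun i _ => ?_
  simp only [hA.apply, Pi.smul_apply, nsmul_eq_mul, Nat.cast_ofNat]
  ring

variable [Fintype ι] {f g : (ι → Bool) → ℝ}

lemma expect_boolSign_mul_eq_zero (hf : DependsOn f S) (ha : a ∉ S) :
    𝔼 x, boolSign (x a) * f x = 0 := by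
  have hinv : Involutive fun x : ι → Bool => update x a (!x a) := fun x => by simp
  have hflip : ∀ x, f (update x a (!x a)) = f x := fun x => hf fun i hi =>
    update_of_ne (ne_of_mem_of_not_mem hi ha) _ _
  have h := Fintype.expect_equiv hinv.toPerm (fun x => boolSign (x a) * f x)
    (fun x => -(boolSign (x a) * f x)) fun x => by
      simp [Involutive.toPerm, hflip, boolSign_not]
  rw [expect_neg_distrib] at h
  linarith

lemma expect_add_boolSign_mul_sq (hf : DependsOn f S) (hg : DependsOn g S) (ha : a ∉ S) :
    𝔼 x, (f x + boolSign (x a) * g x) ^ 2 = 𝔼 x, f x ^ 2 + 𝔼 x, g x ^ 2 := by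
  have cross := expect_boolSign_mul_eq_zero (f := fun x => 2 * f x * g x)
    (fun x y hxy => by simp only [hf hxy, hg hxy]) ha
  rw [← add_zero (_ + _), ← cross, ← expect_add_distrib, ← expect_add_distrib]
  refine expect_congr rfl fun x _ => ?_
  linear_combination g x ^ 2 * boolSign_sq (x a)

lemma expect_add_boolSign_mul_pow_four (hf : DependsOn f S) (hg : DependsOn g S) (ha : a ∉ S) :
    𝔼 x, (f x + boolSign (x a) * g x) ^ 4 =
      𝔼 x, f x ^ 4 + 6 * 𝔼 x, f x ^ 2 * g x ^ 2 + 𝔼 x, g x ^ 4 := by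
  have cross := expect_boolSign_mul_eq_zero (f := fun x => 4 * f x ^ 3 * g x + 4 * f x * g x ^ 3)
    (fun x y hxy => by simp only [hf hxy, hg hxy]) ha
  rw [mul_expect, ← add_zero (_ + _), ← cross, ← expect_add_distrib, ← expect_add_distrib,
    ← expect_add_distrib]
  refine expect_congr rfl fun x _ => ?_
  linear_combination (6 * f x ^ 2 * g x ^ 2 + g x ^ 4 * (boolSign (x a) ^ 2 + 1)
    + 4 * f x * g x ^ 3 * boolSign (x a)) * boolSign_sq (x a)

lemma expect_linearChaos_sq (c : ι → ℝ) (S : Finset ι) :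
    𝔼 x, linearChaos c S x ^ 2 = ∑ i ∈ S, c i ^ 2 := by
  induction S using Finset.induction_on with
  | empty => simp [linearChaos]
  | insert a S ha ih =>
    simp only [linearChaos_insert c ha]
    rw [expect_add_boolSign_mul_sq (dependsOn_linearChaos c S) (fun _ _ _ => rfl)
      ha, ih, Fintype.expect_const, sum_insert ha, add_comm]

lemma expect_linearChaos_pow_four_le (c : ι → ℝ) (S : Finset ι) :
    𝔼 x, linearChaos c S x ^ 4 ≤ 3 * (∑ i ∈ S, c i ^ 2) ^ 2 := by
  induction S using Finset.induction_on with
  | empty => simp [linearChaos]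
  | insert a S ha ih =>
    simp only [linearChaos_insert c ha]
    rw [expect_add_boolSign_mul_pow_four (dependsOn_linearChaos c S) (fun _ _ _ => rfl) ha,
      ← expect_mul, expect_linearChaos_sq, Fintype.expect_const, sum_insert ha]
    nlinarith [sq_nonneg (c a ^ 2)]

lemma expect_quadraticChaos_sq {A : Matrix ι ι ℝ} (hA : A.IsSymm) (S : Finset ι) :
    𝔼 x, quadraticChaos A S x ^ 2 = 2 * ∑ p ∈ S.offDiag, A p.1 p.2 ^ 2 := by
  induction S using Finset.induction_on with
  | empty => simp [quadraticChaos]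
  | insert a S ha ih =>
    simp only [quadraticChaos_insert hA ha]
    rw [expect_add_boolSign_mul_sq (dependsOn_quadraticChaos A S) (dependsOn_linearChaos _ S) ha,
      ih, expect_linearChaos_sq, sum_sq_offDiag_insert hA ha]

lemma expect_quadraticChaos_pow_four_le {A : Matrix ι ι ℝ} (hA : A.IsSymm) (S : Finset ι) :
    𝔼 x, quadraticChaos A S x ^ 4 ≤ 27 * (2 * ∑ p ∈ S.offDiag, A p.1 p.2 ^ 2) ^ 2 := by
  induction S using Finset.induction_on with
  | empty => simp [quadraticChaos]
  | insert a S ha ih =>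
    simp only [quadraticChaos_insert hA ha]
    rw [expect_add_boolSign_mul_pow_four (dependsOn_quadraticChaos A S)
      (dependsOn_linearChaos _ S) ha, sum_sq_offDiag_insert hA ha]
    set u := 2 * ∑ p ∈ S.offDiag, A p.1 p.2 ^ 2
    set v := ∑ i ∈ S, (2 • A a) i ^ 2
    have linear : 𝔼 x, linearChaos (2 • A a) S x ^ 4 ≤ 3 * v ^ 2 :=
      expect_linearChaos_pow_four_le _ S
    have hu : 0 ≤ u := by positivity
    have hv : 0 ≤ v := by positivity
    have cauchySchwarz : 𝔼 x, quadraticChaos A S x ^ 2 * linearChaos (2 • A a) S x ^ 2 ≤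
        9 * (u * v) := by
      refine le_of_sq_le_sq ?_ (by positivity)
      calc _ ≤ _ := expect_mul_sq_le_sq_mul_sq univ _ _
        _ = (𝔼 x, quadraticChaos A S x ^ 4) * 𝔼 x, linearChaos (2 • A a) S x ^ 4 := by
          simp only [← pow_mul, Nat.reduceMul]
        _ ≤ (27 * u ^ 2) * (3 * v ^ 2) := by gcongr
        _ = _ := by ring
    nlinarith [mul_nonneg hu hv, sq_nonneg v]

end Chaos

section GramSchmidt

variable {𝕜 E ι : Type*} [RCLike 𝕜] [NormedAddCommGroup E] [InnerProductSpace 𝕜 E] [LinearOrder ι]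
  [LocallyFiniteOrderBot ι] [WellFoundedLT ι]

lemma gramSchmidt_eq_starProjection_orthogonal (f : ι → E) (i : ι)
    [(span 𝕜 (f '' Set.Iio i)).HasOrthogonalProjection] :
    gramSchmidt 𝕜 f i = (span 𝕜 (f '' Set.Iio i))ᗮ.starProjection (f i) := by
  symm
  apply eq_starProjection_of_mem_orthogonal' (z := f i - gramSchmidt 𝕜 f i)
  · rw [← span_gramSchmidt_Iio, mem_orthogonal]
    exact fun u hu => by
      induction hu using span_induction with
      | zero => simp
      | add => simp_all [inner_add_left]
      | smul => simp_all [inner_smul_left]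
      | mem x hx =>
        obtain ⟨j, hj, rfl⟩ := hx
        exact gramSchmidt_orthogonal 𝕜 f hj.ne
  · apply le_orthogonal_orthogonal
    rw [← span_gramSchmidt_Iio, sub_eq_iff_eq_add'.2 (gramSchmidt_def'' 𝕜 f i)]
    exact sum_mem fun j hj => smul_mem _ _ (subset_span ⟨j, mem_Iio.1 hj, rfl⟩)
  · abel

end GramSchmidt

section Determinant

variable {E ι : Type*} [NormedAddCommGroup E] [InnerProductSpace ℝ E] [FiniteDimensional ℝ E]
  [Fintype ι] [LinearOrder ι] [LocallyFiniteOrderBot ι] [WellFoundedLT ι]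

lemma abs_inner_gramSchmidtOrthonormalBasis (h : finrank ℝ E = Fintype.card ι) (f : ι → E)
    (i : ι) : |⟪gramSchmidtOrthonormalBasis h f i, f i⟫| = ‖gramSchmidt ℝ f i‖ := by
  by_cases hi : gramSchmidtNormed ℝ f i = 0
  · rw [inner_gramSchmidtOrthonormalBasis_eq_zero h hi, abs_zero]
    simpa [gramSchmidtNormed, eq_comm] using hi
  · have inner_self : ⟪gramSchmidt ℝ f i, f i⟫ = ‖gramSchmidt ℝ f i‖ ^ 2 := by
      rw [gramSchmidt_eq_starProjection_orthogonal]
      exact re_inner_starProjection_eq_normSq (span ℝ (f '' Set.Iio i))ᗮ (f i)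
    rw [gramSchmidtOrthonormalBasis_apply h hi, gramSchmidtNormed, real_inner_smul_left, inner_self]
    simp [field]

lemma abs_det_eq_prod_norm_gramSchmidt (e : OrthonormalBasis ι ℝ E) (f : ι → E) :
    |e.toBasis.det f| = ∏ i, ‖gramSchmidt ℝ f i‖ := by
  have h := finrank_eq_card_basis e.toBasis
  set b := gramSchmidtOrthonormalBasis h f with hb
  have change_of_basis : e.toBasis.det f = e.toBasis.det b * b.toBasis.det f := by
    simpa using congr($(AlternatingMap.eq_smul_basis_det b.toBasis e.toBasis.det) f)
  have orthogonal : |e.toBasis.det b| = 1 := by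
    rcases e.det_to_matrix_orthonormalBasis_real b with h | h <;> simp [h]
  rw [change_of_basis, abs_mul, orthogonal, one_mul, hb, gramSchmidtOrthonormalBasis_det, abs_prod]
  exact prod_congr rfl fun i _ => abs_inner_gramSchmidtOrthonormalBasis h f i

end Determinant

lemma finrank_le_finrank_orthogonal_span_add_card {𝕜 E κ : Type*} [RCLike 𝕜]
    [NormedAddCommGroup E] [InnerProductSpace 𝕜 E] [FiniteDimensional 𝕜 E] (f : κ → E)
    (s : Finset κ) : finrank 𝕜 E ≤ finrank 𝕜 (span 𝕜 (f '' s))ᗮ + #s := by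
  classical
  have hspan : finrank 𝕜 (span 𝕜 (f '' s)) ≤ #s := by
    rw [← coe_image]
    exact (finrank_span_finset_le_card _).trans card_image_le
  have := finrank_add_finrank_orthogonal (span 𝕜 (f '' s))
  lia

section SignVector

lemma sum_norm_sq_starProjection {𝕜 E ι : Type*} [RCLike 𝕜] [NormedAddCommGroup E]
    [InnerProductSpace 𝕜 E] [Fintype ι] (e : OrthonormalBasis ι 𝕜 E) (W : Submodule 𝕜 E)
    [W.HasOrthogonalProjection] : ∑ i, ‖W.starProjection (e i)‖ ^ 2 = finrank 𝕜 W := by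
  have : FiniteDimensional 𝕜 E := e.toBasis.finiteDimensional_of_finite
  have isProj : LinearMap.IsProj W (W.starProjection : E →ₗ[𝕜] E) :=
    ⟨starProjection_apply_mem W, fun _ => starProjection_eq_self_iff.2⟩
  have trace_eq := congrArg RCLike.re (isProj.trace.symm.trans (LinearMap.trace_eq_sum_inner _ e))
  rw [RCLike.natCast_re, map_sum] at trace_eq
  rw [trace_eq]
  refine sum_congr rfl fun i _ => ?_
  rw [ContinuousLinearMap.coe_coe, ← inner_starProjection_left_eq_right]
  exact (re_inner_starProjection_eq_normSq W (e i)).symm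

variable {ι : Type*} [Fintype ι]

lemma norm_sum_boolSign_smul_sq {E : Type*} [NormedAddCommGroup E] [InnerProductSpace ℝ E]
    (v : ι → E) (x : ι → Bool) :
    ‖∑ i, boolSign (x i) • v i‖ ^ 2 =
      ∑ i, ‖v i‖ ^ 2 + quadraticChaos (Matrix.gram ℝ v) univ x := by
  classical
  have diagonal : ∑ p ∈ univ.diag, ⟪boolSign (x p.1) • v p.1, boolSign (x p.2) • v p.2⟫ =
      ∑ i, ‖v i‖ ^ 2 := by
    simp [sum_diag, norm_smul, abs_boolSign]
  simp only [← real_inner_self_eq_norm_sq (∑ _, _), sum_inner, inner_sum]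
  rw [sum_comm]
  rw [← sum_product', ← diag_union_offDiag, sum_union (disjoint_diag_offDiag _), diagonal,
    quadraticChaos]
  congr 1
  refine sum_congr rfl fun p _ => ?_
  rw [real_inner_smul_left, real_inner_smul_right, Matrix.gram_apply]
  ring

/-- The vector with coordinates `±1` encoded by a Boolean vector, as an element of Euclidean
space. -/
noncomputable def signVector (x : ι → Bool) : EuclideanSpace ℝ ι :=
  WithLp.toLp 2 fun i => boolSign (x i)

variable (W : Submodule ℝ (EuclideanSpace ℝ ι))

/-- The inner products between the orthogonal projections of the standard basis vectors
onto `W`; equivalently, the matrix of the orthogonal projection onto `W`. -/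
noncomputable def projGram : Matrix ι ι ℝ :=
  Matrix.gram ℝ fun i => W.starProjection (EuclideanSpace.basisFun ι ℝ i)

lemma isSymm_projGram : (projGram W).IsSymm :=
  Matrix.isHermitian_gram ℝ fun i => W.starProjection (EuclideanSpace.basisFun ι ℝ i)

lemma sum_offDiag_projGram_sq_le :
    ∑ p ∈ univ.offDiag, projGram W p.1 p.2 ^ 2 ≤ finrank ℝ W := by
  classical
  set e := EuclideanSpace.basisFun ι ℝ
  calc ∑ p ∈ univ.offDiag, projGram W p.1 p.2 ^ 2
      ≤ ∑ p : ι × ι, projGram W p.1 p.2 ^ 2 := by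
        gcongr
        exact subset_univ _
    _ = ∑ i, ∑ j, ⟪W.starProjection (e i), e j⟫ ^ 2 := by
        rw [Fintype.sum_prod_type]
        refine sum_congr rfl fun i _ => sum_congr rfl fun j _ => ?_
        rw [projGram, Matrix.gram_apply, ← inner_starProjection_left_eq_right,
          starProjection_eq_self_iff.2 (starProjection_apply_mem W _)]
    _ = finrank ℝ W := by
        rw [← sum_norm_sq_starProjection e W]
        refine sum_congr rfl fun i _ => ?_
        simpa using e.sum_sq_norm_inner_left (W.starProjection (e i))

lemma norm_starProjection_signVector_sq (x : ι → Bool) :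
    ‖W.starProjection (signVector x)‖ ^ 2 = finrank ℝ W + quadraticChaos (projGram W) univ x := by
  rw [← sum_norm_sq_starProjection (EuclideanSpace.basisFun ι ℝ) W, projGram,
    ← norm_sum_boolSign_smul_sq, ← (EuclideanSpace.basisFun ι ℝ).sum_repr (signVector x)]
  simp [signVector]

variable [DecidableEq ι] {W} {k : ℕ}

lemma expect_one_sub_norm_starProjection_signVector_sq_div_le (hk : 0 < k) (hW : k ≤ finrank ℝ W) :
    𝔼 x, max 0 (1 - ‖W.starProjection (signVector x)‖ ^ 2 / k) ≤ √(2 / k) := by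
  have hk' : (0 : ℝ) < k := by exact_mod_cast hk
  have hkd : (k : ℝ) ≤ finrank ℝ W := by exact_mod_cast hW
  set d : ℝ := (finrank ℝ W : ℝ)
  have hd : 0 < d := hk'.trans_le hkd
  set Q := quadraticChaos (projGram W) univ
  have pointwise : ∀ x, max 0 (1 - ‖W.starProjection (signVector x)‖ ^ 2 / k) ≤ |Q x| / d := by
    intro x
    refine max_le (by positivity) ?_
    calc 1 - ‖W.starProjection (signVector x)‖ ^ 2 / k
        ≤ 1 - ‖W.starProjection (signVector x)‖ ^ 2 / d := by gcongr
      _ = -Q x / d := by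
        rw [norm_starProjection_signVector_sq]
        field
      _ ≤ |Q x| / d := by
        gcongr
        exact neg_le_abs (Q x)
  have secondMoment : 𝔼 x, Q x ^ 2 ≤ 2 * d := by
    rw [expect_quadraticChaos_sq (isSymm_projGram W)]
    gcongr
    exact sum_offDiag_projGram_sq_le W
  have firstMoment : 𝔼 x, |Q x| ≤ √(2 * d) :=
    (expect_abs_le_sqrt_expect_sq Q).trans (Real.sqrt_le_sqrt secondMoment)
  calc 𝔼 x, max 0 (1 - ‖W.starProjection (signVector x)‖ ^ 2 / k)
      ≤ 𝔼 x, |Q x| / d := expect_le_expect fun x _ => pointwise x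
    _ ≤ √(2 * d) / d := by rw [← expect_div]; gcongr
    _ = √(2 / d) := by
      rw [Real.sqrt_mul zero_le_two, Real.sqrt_div zero_le_two, mul_div_assoc, Real.sqrt_div_self',
        mul_one_div]
    _ ≤ √(2 / k) := by gcongr

lemma uniformProb_norm_starProjection_signVector_sq_lt_le (hk : 0 < k) (hW : k ≤ finrank ℝ W) :
    uniformProb {x | ‖W.starProjection (signVector x)‖ ^ 2 < k / 2} ≤ 1728 / k ^ 2 := by
  have hk' : (0 : ℝ) < k := by exact_mod_cast hk
  have hkd : (k : ℝ) ≤ finrank ℝ W := by exact_mod_cast hW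
  set d : ℝ := (finrank ℝ W : ℝ)
  have hd : 0 < d := hk'.trans_le hkd
  set Q := quadraticChaos (projGram W) univ
  have deviation : {x | ‖W.starProjection (signVector x)‖ ^ 2 < k / 2} ⊆
      {x | (d / 2) ^ 4 ≤ Q x ^ 4} := fun x hx => by
    rw [Set.mem_ofPred_eq, norm_starProjection_signVector_sq] at hx
    rw [Set.mem_ofPred_eq, ← (by decide : Even 4).neg_pow (Q x)]
    gcongr
    linarith
  have fourthMoment : 𝔼 x, Q x ^ 4 ≤ 27 * (2 * d) ^ 2 :=
    (expect_quadraticChaos_pow_four_le (isSymm_projGram W) univ).trans (by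
      gcongr
      exact sum_offDiag_projGram_sq_le W)
  calc _ ≤ uniformProb {x | (d / 2) ^ 4 ≤ Q x ^ 4} := uniformProb_mono deviation
    _ ≤ (𝔼 x, Q x ^ 4) / (d / 2) ^ 4 :=
      uniformProb_setOf_le_le_expect_div (fun x => by positivity) (by positivity)
    _ ≤ 27 * (2 * d) ^ 2 / (d / 2) ^ 4 := by gcongr
    _ = 1728 / d ^ 2 := by field
    _ ≤ 1728 / k ^ 2 := by gcongr

end SignVector

section LittlewoodOfford

variable {ι : Type*} [Fintype ι]

/-- The coordinates at which the sign `boolSign (x i)` agrees with the sign of `u i`. Ordered by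
inclusion, larger agreement sets give larger sums `∑ i, boolSign (x i) * u i`. -/
noncomputable def agreementSet (u : ι → ℝ) (x : ι → Bool) : Finset ι :=
  {i | x i = true ↔ 0 < u i}

lemma mem_agreementSet {u : ι → ℝ} {x : ι → Bool} {i : ι} :
    i ∈ agreementSet u x ↔ (x i = true ↔ 0 < u i) := by
  simp [agreementSet]

lemma agreementSet_injective (u : ι → ℝ) : Injective (agreementSet u) := fun x y hxy => by
  funext i
  have := congr(i ∈ $hxy)
  simp only [mem_agreementSet, eq_iff_iff] at this
  grind

open Classical in
lemma boolSign_mul_eq_ite (u : ι → ℝ) (x : ι → Bool) (i : ι) :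
    boolSign (x i) * u i = if i ∈ agreementSet u x then |u i| else -|u i| := by
  simp only [mem_agreementSet, boolSign]
  grind

lemma sum_boolSign_mul_add_two_mul_le {u : ι → ℝ} {ε : ℝ} (hu : ∀ i, ε ≤ |u i|) {x y : ι → Bool}
    (hxy : agreementSet u x ⊂ agreementSet u y) :
    ∑ i, boolSign (x i) * u i + 2 * ε ≤ ∑ i, boolSign (y i) * u i := by
  classical
  obtain ⟨i, hiy, hix⟩ := exists_of_ssubset hxy
  have hnonneg : ∀ j ∈ univ, 0 ≤ boolSign (y j) * u j - boolSign (x j) * u j := fun j _ => by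
    have hsub : j ∈ agreementSet u x → j ∈ agreementSet u y := fun h => subset_of_ssubset hxy h
    have := abs_nonneg (u j)
    grind [boolSign_mul_eq_ite]
  have hi : 2 * ε ≤ boolSign (y i) * u i - boolSign (x i) * u i := by
    rw [boolSign_mul_eq_ite, boolSign_mul_eq_ite, if_pos hiy, if_neg hix]
    linarith [hu i]
  have := single_le_sum hnonneg (mem_univ i)
  rw [sum_sub_distrib] at this
  linarith

-- Sperner's theorem applies because two comparable agreement sets would separate the sums by `2ε`.
lemma card_abs_add_sum_boolSign_mul_lt_le {u : ι → ℝ} {ε : ℝ} (hu : ∀ i, ε ≤ |u i|) (c : ℝ) :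
    Nat.card {x : ι → Bool | |c + ∑ i, boolSign (x i) * u i| < ε} ≤
      (Fintype.card ι).choose (Fintype.card ι / 2) := by
  classical
  rw [Nat.card_eq_card_toFinset, ← card_image_of_injective _ (agreementSet_injective u)]
  apply IsAntichain.sperner
  rw [coe_image, Set.coe_toFinset]
  rintro _ ⟨x, hx, rfl⟩ _ ⟨y, hy, rfl⟩ hne hsub
  have := sum_boolSign_mul_add_two_mul_le hu (hsub.ssubset_of_ne hne)
  rw [Set.mem_ofPred_eq, abs_lt] at hx hy
  linarith [hx.1, hy.2]

lemma two_mul_add_one_mul_centralBinom_sq_le (m : ℕ) :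
    (2 * m + 1) * m.centralBinom ^ 2 ≤ 16 ^ m := by
  induction m with
  | zero => simp
  | succ m ih =>
    refine le_of_mul_le_mul_left (a := (m + 1) ^ 2) ?_ (by positivity)
    calc _ = (2 * m + 3) * ((m + 1) * (m + 1).centralBinom) ^ 2 := by ring
      _ = 4 * ((2 * m + 3) * (2 * m + 1)) * ((2 * m + 1) * m.centralBinom ^ 2) := by
        rw [Nat.succ_mul_centralBinom_succ]
        ring
      _ ≤ 4 * (4 * (m + 1) ^ 2) * 16 ^ m := by
        gcongr 4 * ?_ * ?_
        nlinarith
      _ = _ := by ring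

lemma centralBinom_div_le_one_div_sqrt (m : ℕ) :
    (m.centralBinom : ℝ) / 2 ^ (2 * m) ≤ 1 / √(2 * m + 1) := by
  rw [div_le_div_iff₀ (by positivity) (by positivity), one_mul]
  refine le_of_sq_le_sq ?_ (by positivity)
  rw [mul_pow, Real.sq_sqrt (by positivity), mul_comm, ← pow_mul, mul_right_comm, pow_mul]
  exact_mod_cast two_mul_add_one_mul_centralBinom_sq_le m

lemma uniformProb_abs_sum_boolSign_mul_lt_le [DecidableEq ι] {u : ι → ℝ} {ε : ℝ} {T : Finset ι}
    {m : ℕ} (hT : #T = 2 * m) (hu : ∀ i ∈ T, ε ≤ |u i|) :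
    uniformProb {x : ι → Bool | |∑ i, boolSign (x i) * u i| < ε} ≤ 1 / √(2 * m + 1) := by
  refine uniformProb_le_of_forall_fiber
    (Equiv.piEquivPiSubtypeProd (· ∈ T) fun _ => Bool).symm fun z => ?_
  have split (y : T → Bool) :
      ∑ i, boolSign ((Equiv.piEquivPiSubtypeProd (· ∈ T) fun _ => Bool).symm (y, z) i) * u i =
        ∑ i : {i // i ∉ T}, boolSign (z i) * u i + ∑ i : T, boolSign (y i) * u i := by
    rw [← Fintype.sum_subtype_add_sum_subtype (· ∈ T), add_comm]
    congr! 2 with ⟨i, hi⟩ _ ⟨i, hi⟩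
    · simp [hi]
    · ext; simp
    · simp [hi]
  refine le_trans ?_ (centralBinom_div_le_one_div_sqrt m)
  have := card_abs_add_sum_boolSign_mul_lt_le (u := fun i : T => u i) (fun i => hu i i.2)
    (∑ i : {i // i ∉ T}, boolSign (z i) * u i)
  rw [Fintype.card_coe, hT, Nat.mul_div_cancel_left _ two_pos, ← Nat.centralBinom_eq_two_mul_choose]
    at this
  have hcard : Fintype.card (T → Bool) = 2 ^ (2 * m) := by simp [hT]
  rw [uniformProb, hcard, Nat.cast_pow, Nat.cast_ofNat]
  simp only [Set.mem_ofPred_eq, split]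
  gcongr

end LittlewoodOfford

section Universal

variable {ι : Type*}

/-- An `(n, l)`-universal set of Boolean vectors, `n` being the number of coordinates: every
pattern on every `l` coordinates is the restriction of some element. -/
def IsUniversalSet (l : ℕ) (B : Set (ι → Bool)) : Prop :=
  ∀ S : Finset ι, #S = l → Set.SurjOn S.restrict B Set.univ

lemma IsUniversalSet.exists_eqOn {l : ℕ} {B : Set (ι → Bool)} (hB : IsUniversalSet l B)
    {S : Finset ι} (hS : #S = l) (y : ι → Bool) : ∃ x ∈ B, Set.EqOn x y S := by
  obtain ⟨x, hxB, hxy⟩ := hB S hS (Set.mem_univ (S.restrict y))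
  exact ⟨x, hxB, fun i hi => congrFun hxy ⟨i, hi⟩⟩

variable [Fintype ι]

-- Otherwise some `x ∈ B` has the signs of `u` on a set `S` of `l` coordinates containing all the
-- large ones, and the sum over `S` cannot be cancelled by the small coordinates.
lemma IsUniversalSet.lt_card_of_orthogonal {l : ℕ} {B : Set (ι → Bool)} (hB : IsUniversalSet l B)
    (hl : l ≤ Fintype.card ι) {u : ι → ℝ} (hu : ∀ x ∈ B, ∑ i, boolSign (x i) * u i = 0) {j₀ : ι}
    (hj₀ : u j₀ ≠ 0) : l < #{i | |u j₀| / Fintype.card ι ≤ |u i|} := by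
  classical
  have hM : 0 < |u j₀| := abs_pos.2 hj₀
  set M := |u j₀|
  set n := Fintype.card ι
  have hn : 1 ≤ n := Fintype.card_pos_iff.2 ⟨j₀⟩
  have hn' : (1 : ℝ) ≤ n := by exact_mod_cast hn
  by_contra! hcard
  obtain ⟨S, hS, hSl⟩ := exists_superset_card_eq hcard hl
  have hj₀S : j₀ ∈ S := hS (by simpa using div_le_self hM.le hn')
  have hl0 : (0 : ℝ) < l := by exact_mod_cast hSl ▸ card_pos.2 ⟨j₀, hj₀S⟩
  obtain ⟨x, hxB, hx⟩ := hB.exists_eqOn hSl fun i => decide (0 ≤ u i)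
  have large : M ≤ ∑ i ∈ S, boolSign (x i) * u i := by
    have habs : ∀ i ∈ S, boolSign (x i) * u i = |u i| := fun i hi => by
      rw [hx hi]
      rcases le_or_gt 0 (u i) with h | h
      · simp [boolSign, h, abs_of_nonneg]
      · simp [boolSign, h.not_ge, abs_of_neg h]
    rw [sum_congr rfl habs]
    exact single_le_sum (f := fun i => |u i|) (fun i _ => abs_nonneg _) hj₀S
  have small : |∑ i ∈ Sᶜ, boolSign (x i) * u i| ≤ (n - l) * (M / n) := by
    calc _ ≤ ∑ i ∈ Sᶜ, |boolSign (x i) * u i| := abs_sum_le_sum_abs _ _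
      _ ≤ ∑ _ ∈ Sᶜ, M / n := sum_le_sum fun _ hi => by
        rw [abs_mul, abs_boolSign, one_mul]
        by_contra! h
        exact mem_compl.1 hi (hS (by simpa using h.le))
      _ = _ := by rw [sum_const, card_compl, hSl, nsmul_eq_mul, Nat.cast_sub hl]
  have gap : (n - l) * (M / n) < M := by
    have : 0 < l * (M / n) := by positivity
    have : n * (M / n) = M := by field
    linarith
  have := hu x hxB
  rw [← sum_add_sum_compl S] at this
  linarith [neg_abs_le (∑ i ∈ Sᶜ, boolSign (x i) * u i)]

lemma inner_signVector (x : ι → Bool) (u : EuclideanSpace ℝ ι) :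
    ⟪signVector x, u⟫ = ∑ i, boolSign (x i) * u i := by
  simp [PiLp.inner_apply, signVector, mul_comm]

lemma inner_sq_le_norm_starProjection_sq {E : Type*} [NormedAddCommGroup E] [InnerProductSpace ℝ E]
    {W : Submodule ℝ E} [W.HasOrthogonalProjection] {u : E} (hu : u ∈ W) (v : E) :
    ⟪v, u⟫ ^ 2 ≤ ‖W.starProjection v‖ ^ 2 * ‖u‖ ^ 2 := by
  calc ⟪v, u⟫ ^ 2 = ⟪W.starProjection v, u⟫ ^ 2 := by
        rw [inner_starProjection_left_eq_right, starProjection_eq_self_iff.2 hu]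
    _ ≤ (‖W.starProjection v‖ * ‖u‖) ^ 2 := by
        rw [← sq_abs]
        gcongr
        exact abs_real_inner_le_norm _ _
    _ = _ := mul_pow _ _ _

lemma norm_sq_le_card_mul_sq {u : EuclideanSpace ℝ ι} {M : ℝ} (hM : ∀ i, |u i| ≤ M) :
    ‖u‖ ^ 2 ≤ Fintype.card ι * M ^ 2 := by
  rw [EuclideanSpace.norm_sq_eq, ← nsmul_eq_mul, ← card_univ]
  refine sum_le_card_nsmul _ _ _ fun i _ => ?_
  gcongr
  exact hM i

lemma uniformProb_norm_starProjection_signVector_sq_lt_inv_le [DecidableEq ι]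
    {W : Submodule ℝ (EuclideanSpace ℝ ι)} (hW : W ≠ ⊥) {m : ℕ} (hm : 2 * m ≤ Fintype.card ι)
    {B : Set (ι → Bool)} (hB : IsUniversalSet (2 * m) B) (hBW : ∀ x ∈ B, signVector x ∈ Wᗮ) :
    uniformProb {x | ‖W.starProjection (signVector x)‖ ^ 2 < 1 / (Fintype.card ι : ℝ) ^ 3} ≤
      1 / √(2 * m + 1) := by
  obtain ⟨u, huW, hu0⟩ := W.exists_mem_ne_zero_of_ne_bot hW
  obtain ⟨i₀, hi₀⟩ : ∃ i, u i ≠ 0 := by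
    by_contra! h
    exact hu0 (PiLp.ext h)
  have : Nonempty ι := ⟨i₀⟩
  obtain ⟨j₀, hj₀⟩ := Finite.exists_max fun i => |u i|
  have huj₀ : u j₀ ≠ 0 := abs_pos.1 ((abs_pos.2 hi₀).trans_le (hj₀ i₀))
  have orthogonal : ∀ x ∈ B, ∑ i, boolSign (x i) * u i = 0 := fun x hx => by
    rw [← inner_signVector]
    exact inner_left_of_mem_orthogonal huW (hBW x hx)
  obtain ⟨T, hT, hTcard⟩ := exists_subset_card_eq (hB.lt_card_of_orthogonal hm orthogonal huj₀).le
  refine le_trans (uniformProb_mono fun x hx => ?_)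
    (uniformProb_abs_sum_boolSign_mul_lt_le hTcard fun i hi => by simpa using hT hi)
  rw [Set.mem_ofPred_eq] at hx ⊢
  rw [← inner_signVector]
  refine abs_lt_of_sq_lt_sq ?_ (by positivity)
  have := abs_pos.2 huj₀
  calc ⟪signVector x, u⟫ ^ 2
      ≤ ‖W.starProjection (signVector x)‖ ^ 2 * ‖u‖ ^ 2 := inner_sq_le_norm_starProjection_sq huW _
    _ ≤ ‖W.starProjection (signVector x)‖ ^ 2 * (Fintype.card ι * |u j₀| ^ 2) := by
        gcongr
        exact norm_sq_le_card_mul_sq hj₀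
    _ < 1 / (Fintype.card ι : ℝ) ^ 3 * (Fintype.card ι * |u j₀| ^ 2) := by gcongr
    _ = (|u j₀| / Fintype.card ι) ^ 2 := by field

end Universal

section RandomUniversal

variable {ι : Type*} [Fintype ι] [DecidableEq ι]

lemma uniformProb_restrict_eq (S : Finset ι) (y : S → Bool) :
    uniformProb {x : ι → Bool | S.restrict x = y} = (1 / 2) ^ #S := by
  have coordinatewise : {x : ι → Bool | S.restrict x = y} =
      {x | ∀ i ∈ S, ∀ hi : i ∈ S, x i = y ⟨i, hi⟩} := by
    ext x
    simp [funext_iff]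
  rw [coordinatewise, uniformProb_setOf_forall_mem S fun i a => ∀ hi : i ∈ S, a = y ⟨i, hi⟩,
    prod_eq_pow_card fun i hi => ?_]
  simp [uniformProb, hi]

variable {κ : Type*} [Fintype κ] [DecidableEq κ]

lemma uniformProb_forall_restrict_ne (R : Finset κ) (S : Finset ι) (y : S → Bool) :
    uniformProb {b : κ → ι → Bool | ∀ r ∈ R, S.restrict (b r) ≠ y} =
      (1 - (1 / 2) ^ #S) ^ #R := by
  have avoid : uniformProb {x : ι → Bool | S.restrict x ≠ y} = 1 - (1 / 2) ^ #S := by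
    rw [← uniformProb_restrict_eq S y, eq_sub_iff_add_eq']
    exact uniformProb_add_compl _
  exact (uniformProb_setOf_forall_mem R fun _ (x : ι → Bool) => S.restrict x ≠ y).trans
    (by rw [prod_const, avoid])

lemma uniformProb_not_isUniversalSet_le (R : Finset κ) (l : ℕ) :
    uniformProb {b : κ → ι → Bool | ¬IsUniversalSet l (b '' R)} ≤
      Fintype.card ι ^ l * 2 ^ l * (1 - (1 / 2) ^ l) ^ #R := by
  have hpow : (0 : ℝ) ≤ 1 - (1 / 2) ^ l :=
    sub_nonneg.2 (pow_le_one₀ (by norm_num) (by norm_num))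
  have missedPattern : {b : κ → ι → Bool | ¬IsUniversalSet l (b '' R)} ⊆
      ⋃ S ∈ powersetCard l univ, ⋃ y ∈ univ, {b | ∀ r ∈ R, S.restrict (b r) ≠ y} := fun b hb => by
    simp only [IsUniversalSet, Set.SurjOn, Set.subset_def] at hb
    push Not at hb
    obtain ⟨S, hS, y, -, hy⟩ := hb
    simp only [Set.mem_iUnion]
    exact ⟨S, mem_powersetCard.2 ⟨subset_univ _, hS⟩, y, mem_univ _, fun r hr hry =>
      hy ⟨b r, ⟨r, hr, rfl⟩, hry⟩⟩
  calc _ ≤ _ := uniformProb_mono missedPattern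
    _ ≤ ∑ S ∈ powersetCard l (univ : Finset ι), ∑ y : S → Bool,
          uniformProb {b : κ → ι → Bool | ∀ r ∈ R, S.restrict (b r) ≠ y} :=
      (uniformProb_biUnion_le _ _).trans (sum_le_sum fun S _ => uniformProb_biUnion_le _ _)
    _ = ∑ S ∈ powersetCard l (univ : Finset ι), 2 ^ l * (1 - (1 / 2) ^ l) ^ #R := by
      refine sum_congr rfl fun S hS => ?_
      simp [uniformProb_forall_restrict_ne, (mem_powersetCard.1 hS).2]
    _ = (Fintype.card ι).choose l * 2 ^ l * (1 - (1 / 2) ^ l) ^ #R := by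
      rw [sum_const, card_powersetCard, card_univ, nsmul_eq_mul, mul_assoc]
    _ ≤ _ := by
      gcongr
      exact_mod_cast Nat.choose_le_pow _ l

end RandomUniversal

section RandomRows

variable {ι κ : Type*} [Fintype ι] [LinearOrder κ] [LocallyFiniteOrderBot κ]

lemma le_finrank_orthogonal_span_Iio (b : κ → ι → Bool) {i : κ} {k : ℕ}
    (hk : k + #(Iio i) ≤ Fintype.card ι) :
    k ≤ finrank ℝ (span ℝ ((fun j => signVector (b j)) '' Set.Iio i))ᗮ := by
  have := finrank_le_finrank_orthogonal_span_add_card (𝕜 := ℝ) (fun j => signVector (b j)) (Iio i)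
  rw [coe_Iio, finrank_euclideanSpace] at this
  exact Nat.le_of_add_le_add_right (hk.trans this)

variable [WellFoundedLT κ]

/-- The distance from the `i`-th row of the sign matrix encoded by `b` to the span of the preceding
rows. -/
noncomputable def rowDist (b : κ → ι → Bool) (i : κ) : ℝ :=
  ‖gramSchmidt ℝ (fun j => signVector (b j)) i‖

lemma rowDist_nonneg (b : κ → ι → Bool) (i : κ) : 0 ≤ rowDist b i :=
  norm_nonneg _

lemma rowDist_update (b : κ → ι → Bool) (i : κ) (x : ι → Bool) :
    rowDist (update b i x) i =
      ‖(span ℝ ((fun j => signVector (b j)) '' Set.Iio i))ᗮ.starProjection (signVector x)‖ := by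
  have preceding : (fun j => signVector (update b i x j)) '' Set.Iio i =
      (fun j => signVector (b j)) '' Set.Iio i :=
    Set.image_congr fun j hj => by rw [update_of_ne (ne_of_lt hj)]
  rw [rowDist, gramSchmidt_eq_starProjection_orthogonal]
  simp only [preceding, update_self]

lemma abs_det_signMatrix {n : ℕ} (b : Fin n → Fin n → Bool) :
    |(signMatrix n b).det| = ∏ i, rowDist b i := by
  rw [← Matrix.det_transpose]
  exact abs_det_eq_prod_norm_gramSchmidt (EuclideanSpace.basisFun (Fin n) ℝ)
    fun i => signVector (b i)

variable [DecidableEq ι] [Fintype κ]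

lemma expect_one_sub_rowDist_sq_div_le {i : κ} {k : ℕ} (hk : 0 < k)
    (hki : k + #(Iio i) ≤ Fintype.card ι) :
    𝔼 b : κ → ι → Bool, max 0 (1 - rowDist b i ^ 2 / k) ≤ √(2 / k) := by
  refine expect_le_of_forall_update i fun b => ?_
  simp only [rowDist_update]
  exact expect_one_sub_norm_starProjection_signVector_sq_div_le hk
    (le_finrank_orthogonal_span_Iio b hki)

lemma uniformProb_rowDist_sq_lt_le {i : κ} {k : ℕ} (hk : 0 < k)
    (hki : k + #(Iio i) ≤ Fintype.card ι) :
    uniformProb {b : κ → ι → Bool | rowDist b i ^ 2 < k / 2} ≤ 1728 / (k : ℝ) ^ 2 := by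
  refine uniformProb_le_of_forall_update i fun b => ?_
  simp only [Set.mem_ofPred_eq, rowDist_update]
  exact uniformProb_norm_starProjection_signVector_sq_lt_le hk
    (le_finrank_orthogonal_span_Iio b hki)

lemma uniformProb_isUniversalSet_and_rowDist_sq_lt_inv_le {i : κ} (hi : #(Iio i) < Fintype.card ι)
    {R : Finset κ} (hR : R ⊆ Iio i) {m : ℕ} (hm : 2 * m ≤ Fintype.card ι) :
    uniformProb {b : κ → ι → Bool | IsUniversalSet (2 * m) (b '' R) ∧
      rowDist b i ^ 2 < 1 / (Fintype.card ι : ℝ) ^ 3} ≤ 1 / √(2 * m + 1) := by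
  refine uniformProb_le_of_forall_update i fun b => ?_
  have preceding (x : ι → Bool) : update b i x '' R = b '' R :=
    Set.image_congr fun j hj => update_of_ne (mem_Iio.1 (hR hj)).ne _ _
  simp only [Set.mem_ofPred_eq, rowDist_update, preceding]
  by_cases hB : IsUniversalSet (2 * m) (b '' R)
  · simp only [hB, true_and]
    refine uniformProb_norm_starProjection_signVector_sq_lt_inv_le ?_ hm hB ?_
    · exact one_le_finrank_iff.1 (le_finrank_orthogonal_span_Iio b (k := 1) (by lia))
    · rintro _ ⟨j, hj, rfl⟩
      exact le_orthogonal_orthogonal _ (subset_span ⟨j, mem_Iio.1 (hR hj), rfl⟩)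
  · simp [hB, uniformProb]

end RandomRows

@[to_additive]
lemma prod_univ_comp_sub_val {M : Type*} [CommMonoid M] (n : ℕ) (g : ℕ → M) :
    ∏ i : Fin n, g (n - i) = ∏ k ∈ Icc 1 n, g k := by
  rw [← Equiv.prod_comp Fin.revPerm, ← Ico_add_one_right_eq_Icc, ← zero_add 1,
    ← prod_Ico_add' g 0 n 1, ← range_eq_Ico, ← Fin.prod_univ_eq_prod_range fun i => g (i + 1)]
  refine prod_congr rfl fun i _ => congrArg g ?_
  rw [Fin.revPerm_apply, Fin.val_rev]
  lia

section LowerBound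

lemma exp_neg_two_mul_max_one_sub_le {s : ℝ} (hs : 1 / 2 ≤ s) :
    Real.exp (-(2 * max 0 (1 - s))) ≤ s := by
  rcases le_total 1 s with h | h
  · simp [h]
  · rw [max_eq_right (sub_nonneg.2 h), Real.exp_neg]
    refine inv_le_of_inv_le₀ (by linarith) (le_trans ?_ (Real.add_one_le_exp _))
    rw [inv_le_iff_one_le_mul₀ (by linarith)]
    nlinarith

lemma mul_exp_neg_four_mul_log_le {n k : ℕ} (hn : n ≠ 0) (hkn : k ≤ n) :
    k * Real.exp (-(4 * Real.log n)) ≤ 1 / (n : ℝ) ^ 3 := by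
  calc k * Real.exp (-(4 * Real.log n)) ≤ n * Real.exp (-(4 * Real.log n)) := by gcongr
    _ = n * ((n : ℝ) ^ 4)⁻¹ := by
      rw [Real.exp_neg, ← Nat.cast_ofNat, Real.exp_nat_mul, Real.exp_log (by positivity)]
    _ = 1 / (n : ℝ) ^ 3 := by field

lemma sum_ite_sub_le_le_mul (n K : ℕ) {c : ℝ} (hc : 0 ≤ c) :
    ∑ i : Fin n, (if n - i ≤ K then c else 0) ≤ K * c := by
  rw [sum_univ_comp_sub_val n fun k => if k ≤ K then c else 0, ← sum_filter, sum_const,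
    nsmul_eq_mul]
  gcongr
  calc _ ≤ #(Icc 1 K) := card_le_card fun k => by simp; lia
    _ = K := by simp

lemma sqrt_factorial_mul_exp_le_prod {n K : ℕ} {d : Fin n → ℝ} (hd : ∀ i, 0 ≤ d i) {t : ℝ}
    (hsum : ∑ i : Fin n, max 0 (1 - d i ^ 2 / (n - i : ℕ)) ≤ t)
    (hbulk : ∀ i : Fin n, K < n - i → (n - i : ℕ) / 2 ≤ d i ^ 2)
    (hlast : ∀ i : Fin n, n - i ≤ K → 1 / (n : ℝ) ^ 3 ≤ d i ^ 2) :
    √(n.factorial) * Real.exp (-(t + 2 * K * Real.log n)) ≤ ∏ i, d i := by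
  let e (i : Fin n) : ℝ :=
    2 * max 0 (1 - d i ^ 2 / (n - i : ℕ)) + if n - i ≤ K then 4 * Real.log n else 0
  have factor (i : Fin n) : (n - i : ℕ) * Real.exp (-e i) ≤ d i ^ 2 := by
    have hk : (0 : ℝ) < (n - i : ℕ) := by exact_mod_cast Nat.sub_pos_of_lt i.2
    by_cases hK : n - i ≤ K
    · simp only [e, if_pos hK]
      refine le_trans ?_ ((mul_exp_neg_four_mul_log_le i.pos.ne' (Nat.sub_le n i)).trans
        (hlast i hK))
      gcongr
      exact le_add_of_nonneg_left (by positivity)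
    · simp only [e, if_neg hK, add_zero]
      rw [← le_div_iff₀' hk]
      refine exp_neg_two_mul_max_one_sub_le ?_
      rw [le_div_iff₀ hk]
      linarith [hbulk i (not_le.1 hK)]
  have total : ∑ i, e i ≤ 2 * (t + 2 * K * Real.log n) := by
    have := sum_ite_sub_le_le_mul n K (c := 4 * Real.log n) (by positivity)
    rw [sum_add_distrib, ← mul_sum]
    linarith
  have factorial : ∏ i : Fin n, ((n - i : ℕ) : ℝ) = n.factorial := by
    rw [prod_univ_comp_sub_val n fun k => (k : ℝ), ← prod_Ico_id_eq_factorial,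
      Ico_add_one_right_eq_Icc, Nat.cast_prod]
  refine le_of_sq_le_sq ?_ (prod_nonneg fun i _ => hd i)
  calc _ = n.factorial * Real.exp (-(2 * (t + 2 * K * Real.log n))) := by
        rw [mul_pow, Real.sq_sqrt (by positivity), ← Real.exp_nat_mul]
        ring_nf
    _ ≤ n.factorial * Real.exp (-∑ i, e i) := by gcongr
    _ = ∏ i : Fin n, (n - i : ℕ) * Real.exp (-e i) := by
        rw [prod_mul_distrib, factorial, ← Real.exp_sum, sum_neg_distrib]
    _ ≤ ∏ i, d i ^ 2 := prod_le_prod (fun i _ => by positivity) fun i _ => factor i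
    _ = _ := prod_pow _ _ _

end LowerBound

section UnionBound

lemma sum_Icc_one_div_sqrt_le (n : ℕ) : ∑ k ∈ Icc 1 n, 1 / √k ≤ 2 * √n := by
  induction n with
  | zero => simp
  | succ n ih =>
    rw [sum_Icc_succ_top n.succ_pos]
    have increment : 1 / √(n + 1 : ℕ) ≤ 2 * √(n + 1 : ℕ) - 2 * √n := by
      rw [div_le_iff₀ (by positivity)]
      have : √(n + 1 : ℕ) ^ 2 = n + 1 := by simp [Real.sq_sqrt, add_nonneg]
      nlinarith [sq_nonneg (√(n + 1 : ℕ) - √n), Real.sq_sqrt (n.cast_nonneg : (0 : ℝ) ≤ n)]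
    linarith

lemma sum_Icc_sqrt_two_div_le (n : ℕ) : ∑ k ∈ Icc 1 n, √(2 / k) ≤ 3 * √n := by
  have sqrt_two : √2 ≤ 3 / 2 := Real.sqrt_le_iff.2 (by norm_num)
  calc _ = √2 * ∑ k ∈ Icc 1 n, 1 / √k := by
        rw [mul_sum]
        exact sum_congr rfl fun k _ => by rw [Real.sqrt_div zero_le_two, mul_one_div]
    _ ≤ 3 / 2 * (2 * √n) := by
        gcongr
        exact sum_Icc_one_div_sqrt_le n
    _ = _ := by ring

variable (n : ℕ)

lemma expect_sum_one_sub_rowDist_sq_div_le :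
    𝔼 b : Fin n → Fin n → Bool, ∑ i : Fin n, max 0 (1 - rowDist b i ^ 2 / (n - i : ℕ)) ≤
      3 * √n := by
  rw [expect_sum_comm]
  calc _ ≤ ∑ i : Fin n, √(2 / (n - i : ℕ)) := sum_le_sum fun i _ =>
        expect_one_sub_rowDist_sq_div_le (Nat.sub_pos_of_lt i.2) (by simp)
    _ = ∑ k ∈ Icc 1 n, √(2 / k) := sum_univ_comp_sub_val n fun k => √(2 / k)
    _ ≤ _ := sum_Icc_sqrt_two_div_le n

variable (K : ℕ)

lemma uniformProb_exists_rowDist_sq_lt_half_le :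
    uniformProb {b : Fin n → Fin n → Bool | ∃ i : Fin n, K < n - i ∧
      rowDist b i ^ 2 < (n - i : ℕ) / 2} ≤ 3456 / (K + 1) := by
  refine (uniformProb_setOf_exists_and_le (fun i : Fin n => K < n - i) _).trans ?_
  calc _ ≤ ∑ i : Fin n with K < n - i.val, 1728 / ((n - i : ℕ) : ℝ) ^ 2 := sum_le_sum fun i _ =>
        uniformProb_rowDist_sq_lt_le (Nat.sub_pos_of_lt i.2) (by simp)
    _ = ∑ k ∈ Ioo K (n + 1), 1728 / (k : ℝ) ^ 2 := by
        rw [sum_filter,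
          sum_univ_comp_sub_val n fun k => if K < k then 1728 / (k : ℝ) ^ 2 else 0, ← sum_filter]
        congr 1
        ext k
        simp
        lia
    _ = 1728 * ∑ k ∈ Ioo K (n + 1), ((k : ℝ) ^ 2)⁻¹ := by simp only [mul_sum, div_eq_mul_inv]
    _ ≤ 1728 * (2 / (K + 1)) := by
        gcongr
        exact sum_Ioo_inv_sq_le K (n + 1)
    _ = _ := by ring

lemma uniformProb_exists_isUniversalSet_and_rowDist_sq_lt_inv_le {m : ℕ} (hm : 2 * m ≤ n) :
    uniformProb {b : Fin n → Fin n → Bool |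
      ∃ i : Fin n, n - i ≤ K ∧ IsUniversalSet (2 * m) (b '' {j : Fin n | j < n - K}) ∧
        rowDist b i ^ 2 < 1 / (n : ℝ) ^ 3} ≤ K / √(2 * m + 1) := by
  refine (uniformProb_setOf_exists_and_le (fun i : Fin n => n - i ≤ K) _).trans ?_
  calc _ ≤ ∑ i : Fin n with n - i.val ≤ K, 1 / √(2 * m + 1) := sum_le_sum fun i hi => by
        have preceding : ({j : Fin n | j < n - K} : Finset (Fin n)) ⊆ Iio i := fun j => by
          have := (mem_filter.1 hi).2
          simp only [mem_filter_univ, mem_Iio, Fin.lt_def]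
          lia
        simpa using uniformProb_isUniversalSet_and_rowDist_sq_lt_inv_le (ι := Fin n)
          (by simp) preceding (by simpa)
    _ ≤ K * (1 / √(2 * m + 1)) := by
        rw [sum_filter]
        exact sum_ite_sub_le_le_mul n K (by positivity)
    _ = _ := mul_one_div _ _

lemma uniformProb_abs_det_signMatrix_lt_le {m : ℕ} (hm : 2 * m ≤ n) {t : ℝ} (ht : 0 < t) :
    uniformProb {b : Fin n → Fin n → Bool |
        |(signMatrix n b).det| < √(n.factorial) * Real.exp (-(t + 2 * K * Real.log n))} ≤
      3 * √n / t + 3456 / (K + 1) +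
        (n ^ (2 * m) * 2 ^ (2 * m) * (1 - (1 / 2) ^ (2 * m)) ^ (n - K) + K / √(2 * m + 1)) := by
  have deviation : uniformProb {b : Fin n → Fin n → Bool |
      t ≤ ∑ i : Fin n, max 0 (1 - rowDist b i ^ 2 / (n - i : ℕ))} ≤ 3 * √n / t := by
    refine (uniformProb_setOf_le_le_expect_div (fun b => by positivity) ht).trans ?_
    gcongr
    exact expect_sum_one_sub_rowDist_sq_div_le n
  have universal : uniformProb {b : Fin n → Fin n → Bool |
      ¬IsUniversalSet (2 * m) (b '' {j : Fin n | j < n - K})} ≤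
        n ^ (2 * m) * 2 ^ (2 * m) * (1 - (1 / 2) ^ (2 * m)) ^ (n - K) := by
    simpa [Fin.card_filter_val_lt] using
      uniformProb_not_isUniversalSet_le (ι := Fin n) {j : Fin n | j < n - K} (2 * m)
  refine le_trans (uniformProb_mono fun b hb => ?_)
    ((uniformProb_union_le _ _).trans (add_le_add
      ((uniformProb_union_le _ _).trans (add_le_add deviation
        (uniformProb_exists_rowDist_sq_lt_half_le n K)))
      ((uniformProb_union_le _ _).trans (add_le_add universal
        (uniformProb_exists_isUniversalSet_and_rowDist_sq_lt_inv_le n K hm)))))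
  contrapose! hb
  simp only [Set.mem_union, Set.mem_ofPred_eq, not_or, not_not, not_exists, not_and, not_lt,
    not_le] at hb ⊢
  obtain ⟨⟨hsum, hbulk⟩, hB, hlast⟩ := hb
  rw [abs_det_signMatrix]
  exact sqrt_factorial_mul_exp_le_prod (rowDist_nonneg b) hsum.le hbulk
    fun i hi => hlast i hi hB

end UnionBound

section Asymptotics

lemma tendsto_pow_mul_pow_mul_pow_sub (l K : ℕ) :
    Tendsto (fun n : ℕ => (n : ℝ) ^ l * 2 ^ l * (1 - (1 / 2) ^ l) ^ (n - K)) atTop (𝓝 0) := by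
  set r : ℝ := 1 - (1 / 2) ^ l
  have hr : 0 ≤ r := sub_nonneg.2 (pow_le_one₀ (by norm_num) (by norm_num))
  have hr' : |r| < 1 := by
    rw [abs_of_nonneg hr]
    exact sub_lt_self 1 (by positivity)
  rw [← tendsto_add_atTop_iff_nat K]
  have decay := (tendsto_pow_const_mul_const_pow_of_abs_lt_one l hr').const_mul
    ((2 * (K + 1 : ℝ)) ^ l)
  rw [mul_zero] at decay
  refine squeeze_zero' (.of_forall fun n => by positivity) ?_ decay
  filter_upwards [eventually_ge_atTop 1] with n hn
  have hn : (n + K) * 2 ≤ 2 * (K + 1) * n := by nlinarith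
  rw [Nat.add_sub_cancel, ← mul_assoc, ← mul_pow, ← mul_pow]
  refine mul_le_mul_of_nonneg_right (pow_le_pow_left₀ (by positivity) ?_ l) (by positivity)
  exact_mod_cast hn

lemma tendsto_log_div_sqrt : Tendsto (fun n : ℕ => Real.log n / √n) atTop (𝓝 0) := by
  have : Real.log =o[atTop] Real.sqrt := by
    simpa only [← Real.sqrt_eq_rpow] using isLittleO_log_rpow_atTop (r := 1 / 2) (by norm_num)
  exact this.tendsto_div_nhds_zero.comp tendsto_natCast_atTop_atTop

variable {f : ℕ → ℝ}

lemma eventually_mul_log_le_of_tendsto_div_sqrt (hf : Tendsto (fun n => f n / √n) atTop atTop)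
    (c : ℝ) : ∀ᶠ n : ℕ in atTop, c * Real.log n ≤ f n := by
  have hlog := tendsto_log_div_sqrt.const_mul c
  rw [mul_zero] at hlog
  filter_upwards [hlog.eventually_le_const one_pos, hf.eventually_ge_atTop 1,
    eventually_gt_atTop 0] with n hlog hf hn
  rw [← div_le_div_iff_of_pos_right (Real.sqrt_pos.2 (Nat.cast_pos.2 hn)), ← mul_div_assoc']
  exact hlog.trans hf

lemma eventually_uniformProb_abs_det_signMatrix_lt_le
    (hf : Tendsto (fun n => f n / √n) atTop atTop) {δ : ℝ} (hδ : 0 < δ) :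
    ∀ᶠ n in atTop, uniformProb {b : Fin n → Fin n → Bool |
      |(signMatrix n b).det| < √(n.factorial) * Real.exp (-f n)} ≤ δ := by
  obtain ⟨K, hK⟩ : ∃ K : ℕ, 3456 / ((K : ℝ) + 1) ≤ δ / 4 :=
    ((tendsto_const_nhds.div_atTop (tendsto_atTop_add_const_right _ _
      tendsto_natCast_atTop_atTop)).eventually_le_const (by positivity)).exists
  obtain ⟨m, hm⟩ : ∃ m : ℕ, K / √(2 * m + 1) ≤ δ / 4 :=
    ((tendsto_const_nhds.div_atTop (Real.tendsto_sqrt_atTop.comp (tendsto_atTop_add_const_right _ _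
      (tendsto_natCast_atTop_atTop.const_mul_atTop two_pos)))).eventually_le_const
      (by positivity)).exists
  filter_upwards [eventually_ge_atTop (2 * m), eventually_gt_atTop 0,
    hf.eventually_ge_atTop (24 / δ), eventually_mul_log_le_of_tendsto_div_sqrt hf (4 * K),
    (tendsto_pow_mul_pow_mul_pow_sub (2 * m) K).eventually_le_const (by positivity : 0 < δ / 4)]
    with n hmn hn hfn hlog hpow
  have hn' : 0 < √(n : ℝ) := Real.sqrt_pos.2 (Nat.cast_pos.2 hn)
  have ht : 0 < f n / 2 :=
    half_pos ((div_pos_iff_of_pos_right hn').1 ((div_pos (by simp) hδ).trans_le hfn))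
  rw [div_le_div_iff₀ hδ hn'] at hfn
  have deviation : 3 * √n / (f n / 2) ≤ δ / 4 := by
    rw [div_le_iff₀ ht]
    linarith
  have weaken : √(n.factorial) * Real.exp (-f n) ≤
      √(n.factorial) * Real.exp (-(f n / 2 + 2 * K * Real.log n)) := by
    gcongr
    linarith
  refine (uniformProb_mono fun b hb => lt_of_lt_of_le hb weaken).trans
    ((uniformProb_abs_det_signMatrix_lt_le n K hmn ht).trans ?_)
  linarith

theorem abs_det_random_sign_matrix_large_general (hf : Tendsto (fun n => f n / √n) atTop atTop) :
    ∀ δ > (0 : ℝ), ∃ N : ℕ, ∀ n ≥ N,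
      1 - δ ≤
        (Nat.card {b : Fin n → Fin n → Bool //
            √(n.factorial) * Real.exp (-f n) ≤ |(signMatrix n b).det|} : ℝ) / 2 ^ (n ^ 2) := by
  intro δ hδ
  rw [← eventually_atTop]
  filter_upwards [eventually_uniformProb_abs_det_signMatrix_lt_le hf hδ] with n hn
  have card : (Fintype.card (Fin n → Fin n → Bool) : ℝ) = 2 ^ n ^ 2 := by simp [sq, pow_mul]
  have total := uniformProb_add_compl {b : Fin n → Fin n → Bool |
    |(signMatrix n b).det| < √(n.factorial) * Real.exp (-f n)}
  simp only [Set.compl_ofPred, not_lt] at total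
  rw [← card]
  change 1 - δ ≤ uniformProb {b | _ ≤ |(signMatrix n b).det|}
  linarith

lemma tendsto_mul_sqrt_mul_log_div_sqrt {c : ℝ} (hc : 0 < c) :
    Tendsto (fun n : ℕ => c * √(n * Real.log n) / √n) atTop atTop := by
  refine Tendsto.congr' ?_ ((Real.tendsto_sqrt_atTop.comp
    (Real.tendsto_log_atTop.comp tendsto_natCast_atTop_atTop)).const_mul_atTop hc)
  filter_upwards [eventually_gt_atTop 0] with n hn
  have : 0 < √(n : ℝ) := Real.sqrt_pos.2 (Nat.cast_pos.2 hn)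
  rw [Real.sqrt_mul n.cast_nonneg]
  simp [field]

end Asymptotics

/-- With probability `1 - o(1)`, a uniformly random `n × n` `±1` matrix has
`|det M_n| ≥ √(n!) · exp(-29 √(n ln n))`. -/
theorem abs_det_random_sign_matrix_large :
    ∀ δ > (0 : ℝ), ∃ N : ℕ, ∀ n ≥ N,
      1 - δ ≤
        (Nat.card {b : Fin n → Fin n → Bool //
            Real.sqrt (Nat.factorial n) * Real.exp (-29 * Real.sqrt (n * Real.log n)) ≤
              |(signMatrix n b).det|} : ℝ) / 2 ^ (n ^ 2) := by
  simpa only [neg_mul] using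
    abs_det_random_sign_matrix_large_general (tendsto_mul_sqrt_mul_log_div_sqrt (c := 29) (by simp))
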